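/- Let η = diag(1_m, −1_n), let M be a real symmetric (m+n)×(m+n) matrix with M η M = η, let S ∈ ℂ with Im S ≠ 0, and let a,b,c,d ∈ ℝ with ad − bc = 1. Set 𝒩 := i·(Im S)·M + (Re S)·η. Then a + bS ≠ 0, the matrix a·1 + b·η𝒩 is invertible, and (c·η + d·𝒩)·(a·1 + b·η𝒩)⁻¹ = i·(Im S′)·M + (Re S′)·η, where S′ := (c + dS)/(a + bS). -/

import Mathlib

open Matrix

/-!
Since `η² = 1` and `MηM = η`, the element `ηM` squares to `1`, so `iηM` is a complex structure and
`x + iy ↦ x + y·(iηM)` is a ring homomorphism `φ` on `ℂ`. The period matrix is `𝒩(S) = η φ(S)`,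
whence `a + b η𝒩 = φ(a + bS)` and `cη + d𝒩 = η φ(c + dS)`: left multiplication by `η` and `φ`
carry the fractional linear action on matrices to the one on `ℂ`.
-/

theorem add_mul_ne_zero_of_im_ne_zero {a b : ℝ} {z : ℂ} (hz : z.im ≠ 0) (hab : a ≠ 0 ∨ b ≠ 0) :
    (a : ℂ) + b * z ≠ 0 := by
  have hba : ![b, a] ≠ 0 := by simpa [or_iff_not_imp_right] using hab
  simpa [add_comm] using UpperHalfPlane.linear_ne_zero_of_im hz hba

theorem map_ofReal_mul {l m n : Type*} [Fintype m] (P : Matrix l m ℝ) (Q : Matrix m n ℝ) :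
    (P * Q).map Complex.ofReal = P.map Complex.ofReal * Q.map Complex.ofReal :=
  Matrix.map_mul (f := Complex.ofRealHom)

theorem fromBlocks_one_neg_one_mul_self {m n R : Type*} [Fintype m] [Fintype n] [DecidableEq m]
    [DecidableEq n] [Ring R] :
    (fromBlocks 1 0 0 (-1) : Matrix (m ⊕ n) (m ⊕ n) R) * fromBlocks 1 0 0 (-1) = 1 := by
  simp [fromBlocks_multiply]

theorem mul_mul_mul_eq_one {G : Type*} [Monoid G] {η M : G} (hη : η * η = 1)
    (hM : M * η * M = η) : η * M * (η * M) = 1 := by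
  rw [mul_assoc, ← mul_assoc M, hM, hη]

section ComplexAlgebra

variable {A : Type*} [Ring A] [Algebra ℂ A] {η M J : A}

/-- The period matrix `𝒩(S) = i (Im S) M + (Re S) η` with axion–dilaton `S`, for elements `η` and
`M` of an arbitrary complex algebra. -/
def periodMatrix (η M : A) (S : ℂ) : A :=
  (Complex.I * (S.im : ℂ)) • M + (S.re : ℂ) • η

/-- The homomorphism `x + iy ↦ x + y·(iJ)` given by the complex structure `iJ`, for an
involution `J`. It is only `ℝ`-linear: `i` goes to `iJ`, not to the scalar `i`. -/
noncomputable def involutionLift (J : A) (hJ : J * J = 1) : ℂ →ₐ[ℝ] A :=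
  Complex.liftAux (Complex.I • J) (by simp [smul_smul, hJ])

theorem involutionLift_apply (hJ : J * J = 1) (z : ℂ) :
    involutionLift J hJ z = (z.re : ℂ) • (1 : A) + (Complex.I * (z.im : ℂ)) • J := by
  rw [involutionLift, Complex.liftAux_apply, Algebra.algebraMap_eq_smul_one, mul_comm Complex.I,
    mul_smul, Complex.coe_smul, Complex.coe_smul]

theorem involutionLift_add_mul (hJ : J * J = 1) (a b : ℝ) (z : ℂ) :
    involutionLift J hJ (a + b * z) = (a : ℂ) • (1 : A) + (b : ℂ) • involutionLift J hJ z := by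
  have hz : (a + b * z : ℂ) = algebraMap ℝ ℂ a + b • z := by simp
  rw [hz, map_add, AlgHom.commutes, map_smul, Algebra.algebraMap_eq_smul_one, Complex.coe_smul,
    Complex.coe_smul]

theorem periodMatrix_eq_mul_involutionLift (hη : η * η = 1) (hJ : η * M * (η * M) = 1) (S : ℂ) :
    periodMatrix η M S = η * involutionLift (η * M) hJ S := by
  have hηηM : η * (η * M) = M := by rw [← mul_assoc, hη, one_mul]
  rw [involutionLift_apply, mul_add, mul_smul_comm, mul_smul_comm, mul_one, hηηM, add_comm,
    periodMatrix]

theorem smul_one_add_smul_mul_periodMatrix (hη : η * η = 1) (hJ : η * M * (η * M) = 1)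
    (a b : ℝ) (S : ℂ) :
    (a : ℂ) • (1 : A) + (b : ℂ) • (η * periodMatrix η M S) =
      involutionLift (η * M) hJ (a + b * S) := by
  rw [periodMatrix_eq_mul_involutionLift hη hJ, ← mul_assoc, hη, one_mul, involutionLift_add_mul]

theorem smul_add_smul_periodMatrix (hη : η * η = 1) (hJ : η * M * (η * M) = 1)
    (c d : ℝ) (S : ℂ) :
    (c : ℂ) • η + (d : ℂ) • periodMatrix η M S =
      η * involutionLift (η * M) hJ (c + d * S) := by
  rw [periodMatrix_eq_mul_involutionLift hη hJ, involutionLift_add_mul, mul_add, mul_smul_comm,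
    mul_smul_comm, mul_one]

theorem period_matrix_SL2_covariance_general (hη : η * η = 1) (hM : M * η * M = η) {S : ℂ}
    {a b : ℝ} (hden : (a : ℂ) + b * S ≠ 0) (c d : ℝ) :
    IsUnit ((a : ℂ) • (1 : A) + (b : ℂ) • (η * periodMatrix η M S)) ∧
      ((c : ℂ) • η + (d : ℂ) • periodMatrix η M S) *
          Ring.inverse ((a : ℂ) • (1 : A) + (b : ℂ) • (η * periodMatrix η M S)) =
        periodMatrix η M ((c + d * S) / (a + b * S)) := by
  have hJ : η * M * (η * M) = 1 := mul_mul_mul_eq_one hη hM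
  have hunit : IsUnit (involutionLift (η * M) hJ (a + b * S)) := hden.isUnit.map _
  rw [smul_one_add_smul_mul_periodMatrix hη hJ, smul_add_smul_periodMatrix hη hJ,
    periodMatrix_eq_mul_involutionLift hη hJ]
  refine ⟨hunit, Eq.symm ?_⟩
  rw [Ring.eq_mul_inverse_iff_mul_eq _ _ _ hunit, mul_assoc, ← map_mul, div_mul_cancel₀ _ hden]

end ComplexAlgebra

/-- For `η = diag(1_m,−1_n)`, `M` real symmetric with `MηM = η`,
`S ∈ ℂ` with `Im S ≠ 0`, and `[[a,b],[c,d]] ∈ SL(2,ℝ)`, set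
`𝒩 = i·(Im S)·M + (Re S)·η`.  Then `a + bS ≠ 0`, `a·1 + b·η𝒩` is invertible, and
`(c·η + d·𝒩)·(a·1 + b·η𝒩)⁻¹ = i·(Im S′)·M + (Re S′)·η` with `S′ = (c+dS)/(a+bS)`. -/
theorem period_matrix_SL2_covariance {m n : ℕ}
    (η M : Matrix (Fin m ⊕ Fin n) (Fin m ⊕ Fin n) ℝ)
    (hη : η = fromBlocks 1 0 0 (-1))
    (hMsymm : Mᵀ = M) (hMη : M * η * M = η)
    (S : ℂ) (hS : S.im ≠ 0)
    (a b c d : ℝ) (hdet : a * d - b * c = 1)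
    (N : Matrix (Fin m ⊕ Fin n) (Fin m ⊕ Fin n) ℂ)
    (hN : N = (Complex.I * (S.im : ℂ)) • M.map Complex.ofReal +
      (S.re : ℂ) • η.map Complex.ofReal)
    (S' : ℂ)
    (hS' : S' = ((c : ℂ) + (d : ℂ) * S) / ((a : ℂ) + (b : ℂ) * S)) :
    ((a : ℂ) + (b : ℂ) * S ≠ 0) ∧
    IsUnit ((a : ℂ) • (1 : Matrix (Fin m ⊕ Fin n) (Fin m ⊕ Fin n) ℂ) +
      (b : ℂ) • (η.map Complex.ofReal * N)) ∧
    ((c : ℂ) • η.map Complex.ofReal + (d : ℂ) • N) *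
        ((a : ℂ) • (1 : Matrix (Fin m ⊕ Fin n) (Fin m ⊕ Fin n) ℂ) +
          (b : ℂ) • (η.map Complex.ofReal * N))⁻¹ =
      (Complex.I * (S'.im : ℂ)) • M.map Complex.ofReal +
        (S'.re : ℂ) • η.map Complex.ofReal := by
  subst hη hN hS'
  have hden : (a : ℂ) + b * S ≠ 0 := add_mul_ne_zero_of_im_ne_zero hS (by grind)
  rw [nonsing_inv_eq_ringInverse]
  exact ⟨hden, period_matrix_SL2_covariance_general
    (by simp [← map_ofReal_mul, fromBlocks_one_neg_one_mul_self])
    (by rw [← map_ofReal_mul, ← map_ofReal_mul, hMη]) hden c d⟩
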